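/- arXiv:1703.01581 — 3 statements merged into one kernel-verified Lean document; each statement's English description precedes it below -/
import Mathlib

section
/- Let ⟨yₙ⟩ₙ₌₁^∞ be a minimal sequence in ℕ and let A be a central* set in (ℕ, +). Then there exists a sum subsystem ⟨xₙ⟩ₙ₌₁^∞ of ⟨yₙ⟩ₙ₌₁^∞ such that FS(⟨xₙ⟩ₙ₌₁^∞) ∪ FP(⟨xₙ⟩ₙ₌₁^∞) ⊆ A. -/
/-- The semigroup operation `+` on ultrafilters: `A ∈ p + q` iff
`{x : {y : x + y ∈ A} ∈ q} ∈ p`. -/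
def uadd (p q : Ultrafilter ℕ) : Ultrafilter ℕ :=
  p.bind fun x => q.map fun y => x + y

/-- The ultrafilters on ℕ that live on the positive integers; these encode the
Stone–Čech compactification βℕ of the semigroup of positive integers. -/
def PosUlt : Set (Ultrafilter ℕ) := {p | {n : ℕ | 0 < n} ∈ p}

/-- `L` is a left ideal of `(βℕ, +)` (ℕ the positive integers). -/
def IsLeftIdeal (L : Set (Ultrafilter ℕ)) : Prop :=
  L.Nonempty ∧ L ⊆ PosUlt ∧ ∀ p ∈ PosUlt, ∀ q ∈ L, uadd p q ∈ L

/-- `L` is a minimal left ideal of `(βℕ, +)`. -/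
def IsMinimalLeftIdeal (L : Set (Ultrafilter ℕ)) : Prop :=
  IsLeftIdeal L ∧ ∀ L', IsLeftIdeal L' → L' ⊆ L → L' = L

/-- The smallest two-sided ideal `K(βℕ, +)`, i.e. the union of all minimal left ideals. -/
def K : Set (Ultrafilter ℕ) := {p | ∃ L, IsMinimalLeftIdeal L ∧ p ∈ L}

/-- Finite sums of distinct terms of the sequence `⟨xₙ⟩ₙ₌ₘ^∞`, i.e. over index sets
contained in `{m, m+1, …}`. -/
def FSfrom (x : ℕ → ℕ) (m : ℕ) : Set ℕ :=
  {s | ∃ H : Finset ℕ, H.Nonempty ∧ (∀ t ∈ H, m ≤ t) ∧ s = ∑ t ∈ H, x t}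

/-- Finite sums of distinct terms of a sequence. -/
def FS (x : ℕ → ℕ) : Set ℕ :=
  {s | ∃ H : Finset ℕ, H.Nonempty ∧ s = ∑ t ∈ H, x t}

/-- Finite products of distinct terms of a sequence. -/
def FP (x : ℕ → ℕ) : Set ℕ :=
  {s | ∃ H : Finset ℕ, H.Nonempty ∧ s = ∏ t ∈ H, x t}

/-- `x` is a sum subsystem of `y`. -/
def SumSubsystem (x y : ℕ → ℕ) : Prop :=
  ∃ H : ℕ → Finset ℕ, (∀ n, (H n).Nonempty) ∧
    (∀ n, ∀ i ∈ H n, ∀ j ∈ H (n + 1), i < j) ∧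
    (∀ n, x n = ∑ t ∈ H n, y t)

/-- `⟨yₙ⟩` is a minimal sequence: some `p ∈ K(βℕ, +)` contains `FS(⟨yₙ⟩ₙ₌ₘ^∞)`
for every `m`. -/
def MinimalSequence (y : ℕ → ℕ) : Prop :=
  ∃ p : Ultrafilter ℕ, p ∈ K ∧ ∀ m : ℕ, FSfrom y m ∈ p

/-- `A` is a central* set in `(ℕ, +)`: it belongs to every minimal idempotent,
i.e. every idempotent ultrafilter lying in `K(βℕ, +)`. -/
def CentralStar (A : Set ℕ) : Prop :=
  ∀ p : Ultrafilter ℕ, uadd p p = p → p ∈ K → A ∈ p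

open Filter

theorem mem_uadd' (p q : Ultrafilter ℕ) (s : Set ℕ) :
    s ∈ uadd p q ↔ {x | {y | x + y ∈ s} ∈ q} ∈ p := Iff.rfl

theorem uadd_assoc' (p q r : Ultrafilter ℕ) :
    uadd (uadd p q) r = uadd p (uadd q r) := by
  ext s
  simp only [mem_uadd', Set.mem_ofPred_eq, add_assoc]

theorem uadd_continuous' (q : Ultrafilter ℕ) : Continuous (fun p => uadd p q) :=
  ultrafilterBasis_is_basis.continuous_iff.2 <| Set.forall_mem_range.mpr fun s ↦
    ultrafilter_isOpen_basic { m : ℕ | {m' | m + m' ∈ s} ∈ q }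

theorem uadd_pos' {p q : Ultrafilter ℕ} (hq : q ∈ PosUlt) : uadd p q ∈ PosUlt := by
  change {n : ℕ | 0 < n} ∈ uadd p q
  rw [mem_uadd']
  refine Filter.univ_mem' fun x => ?_
  refine Filter.mem_of_superset hq fun y (hy : 0 < y) => ?_
  change 0 < x + y
  omega

theorem map_uadd' (n : ℕ) (p q : Ultrafilter ℕ) :
    (uadd p q).map (n * ·) = uadd (p.map (n * ·)) (q.map (n * ·)) := by
  ext s
  simp only [mem_uadd', Ultrafilter.mem_map, Set.preimage, Set.mem_ofPred_eq, mul_add]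

theorem mem_K_iff' (p : Ultrafilter ℕ) :
    p ∈ K ↔ p ∈ PosUlt ∧ ∀ r ∈ PosUlt, ∃ s ∈ PosUlt, uadd s (uadd r p) = p := by
  constructor
  · rintro ⟨L, ⟨⟨hne, hsub, hL⟩, hmin⟩, hp⟩
    refine ⟨hsub hp, fun r hr => ?_⟩
    have hrp : uadd r p ∈ L := hL r hr p hp
    have := hmin ((fun s => uadd s (uadd r p)) '' PosUlt)
      ⟨⟨_, r, hr, rfl⟩, ?_, ?_⟩ ?_
    · rw [← this] at hp
      exact hp
    · rintro _ ⟨s, hs, rfl⟩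
      exact uadd_pos' (hsub hrp)
    · rintro t ht _ ⟨s, hs, rfl⟩
      exact ⟨uadd t s, uadd_pos' hs, uadd_assoc' _ _ _⟩
    · rintro _ ⟨s, hs, rfl⟩
      exact hL s hs _ hrp
  · rintro ⟨hp, h⟩
    refine ⟨(fun s => uadd s p) '' PosUlt, ⟨⟨⟨_, p, hp, rfl⟩, ?_, ?_⟩, ?_⟩, ?_⟩
    · rintro _ ⟨s, hs, rfl⟩
      exact uadd_pos' hp
    · rintro t ht _ ⟨s, hs, rfl⟩
      exact ⟨uadd t s, uadd_pos' hs, uadd_assoc' _ _ _⟩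
    · rintro L' ⟨⟨z, hz⟩, hsub, hL'⟩ hle
      refine Set.Subset.antisymm hle ?_
      obtain ⟨r, hr, rfl⟩ := hle hz
      obtain ⟨s, hs, hsr⟩ := h r hr
      have hpL : p ∈ L' := by
        have := hL' s hs _ hz
        simp only at this
        rwa [hsr] at this
      rintro _ ⟨t, ht, rfl⟩
      exact hL' t ht _ hpL
    · obtain ⟨s, hs, hsr⟩ := h p hp
      exact ⟨uadd s p, uadd_pos' hp, by simp only [uadd_assoc']; exact hsr⟩

theorem map_pos' {n : ℕ} (hn : 0 < n) {p : Ultrafilter ℕ} (hp : p ∈ PosUlt) :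
    p.map (n * ·) ∈ PosUlt := by
  change _ ∈ p.map (n * ·)
  rw [Ultrafilter.mem_map]
  exact Filter.mem_of_superset hp fun y (hy : 0 < y) => Nat.mul_pos hn hy

theorem map_mem_K' {n : ℕ} (hn : 0 < n) {q : Ultrafilter ℕ} (hq : q ∈ K) :
    q.map (n * ·) ∈ K := by
  rw [mem_K_iff'] at hq ⊢
  refine ⟨map_pos' hn hq.1, fun r hr => ?_⟩
  obtain ⟨j, hj⟩ : ∃ j, {x | n ∣ j + x} ∈ r := by
    have : (⋃ j ∈ Set.Iic n, {x | n ∣ j + x}) ∈ r := by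
      refine Filter.univ_mem' fun x => ?_
      simp only [Set.mem_iUnion]
      refine ⟨n - x % n, Set.mem_Iic.2 (Nat.sub_le _ _), ?_⟩
      have h1 := Nat.mod_lt x hn
      have h2 := Nat.div_add_mod x n
      refine ⟨1 + x / n, ?_⟩
      rw [mul_add]
      omega
    rw [Ultrafilter.finite_biUnion_mem_iff (Set.finite_Iic n)] at this
    obtain ⟨j, _, hj⟩ := this
    exact ⟨j, hj⟩
  set r' : Ultrafilter ℕ := r.map (fun x => (j + x) / n) with hr'
  have hr'pos : r' ∈ PosUlt := by
    change _ ∈ r.map _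
    rw [Ultrafilter.mem_map]
    filter_upwards [hj, hr] with x hx (hx0 : 0 < x)
    exact Nat.div_pos (Nat.le_of_dvd (by omega) hx) hn
  have hmap : r'.map (n * ·) = uadd (pure j) r := by
    ext s
    rw [mem_uadd', Ultrafilter.mem_pure, Ultrafilter.mem_map, hr', Ultrafilter.mem_map]
    refine Filter.congr_sets (f := (r : Filter ℕ)) ?_
    filter_upwards [hj] with x hx
    have : n * ((j + x) / n) = j + x := Nat.mul_div_cancel' hx
    simp [this]
  obtain ⟨s, hs, hsr⟩ := hq.2 r' hr'pos
  refine ⟨uadd (s.map (n * ·)) (pure j), ?_, ?_⟩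
  · change {n : ℕ | 0 < n} ∈ uadd (s.map (n * ·)) (pure j)
    rw [mem_uadd']
    filter_upwards [map_pos' hn hs] with x hx
    change {y | 0 < x + y} ∈ (pure j : Ultrafilter ℕ)
    rw [Ultrafilter.mem_pure]
    exact Nat.add_pos_left hx j
  · rw [uadd_assoc', ← uadd_assoc' (pure j), ← hmap, ← map_uadd', ← map_uadd', hsr]

theorem exists_min_idem' (y : ℕ → ℕ) (hy : ∀ n, 0 < y n) (hmin : MinimalSequence y) :
    ∃ q : Ultrafilter ℕ, uadd q q = q ∧ q ∈ K ∧ ∀ m, FSfrom y m ∈ q := by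
  obtain ⟨p, ⟨L, hL, hpL⟩, hp⟩ := hmin
  letI : AddSemigroup (Ultrafilter ℕ) := { add := uadd, add_assoc := uadd_assoc' }
  let T : Set (Ultrafilter ℕ) := ⋂ m, {u | FSfrom y m ∈ u}
  have hTc : IsCompact T :=
    IsClosed.isCompact (isClosed_iInter fun i => ultrafilter_isClosed_basic _)
  have hTadd : ∀ u ∈ T, ∀ v ∈ T, uadd u v ∈ T := by
    intro u hu v hv
    simp only [T, Set.mem_iInter, Set.mem_ofPred_eq] at hu hv ⊢
    intro m
    rw [mem_uadd']
    filter_upwards [hu m] with a ha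
    obtain ⟨H, hH, hHm, rfl⟩ := ha
    change {b | _ + b ∈ _} ∈ v
    filter_upwards [hv (max m (H.sup id + 1))] with b hb
    obtain ⟨G, hG, hGm, rfl⟩ := hb
    refine ⟨H ∪ G, hH.mono Finset.subset_union_left, ?_, ?_⟩
    · intro t ht
      rcases Finset.mem_union.1 ht with h | h
      · exact hHm t h
      · exact (le_max_left _ _).trans (hGm t h)
    · rw [Finset.sum_union]
      rw [Finset.disjoint_left]
      intro t ht ht'
      have h1 : t ≤ H.sup id := Finset.le_sup (f := id) ht
      have h2 := (le_max_right _ _).trans (hGm t ht')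
      omega
  have hTpos : T ⊆ PosUlt := by
    intro u hu
    have := Set.mem_iInter.1 hu 0
    refine Filter.mem_of_superset this ?_
    rintro _ ⟨H, hH, -, rfl⟩
    exact Finset.sum_pos (fun i _ => hy i) hH
  have hpT : p ∈ T := Set.mem_iInter.2 hp
  obtain ⟨q, hq, hqq⟩ := exists_idempotent_in_compact_add_subsemigroup
    (M := Ultrafilter ℕ) uadd_continuous' ((fun u => uadd u p) '' T) ⟨_, p, hpT, rfl⟩
    (hTc.image (uadd_continuous' p)) (by
      rintro _ ⟨u, hu, rfl⟩ _ ⟨v, hv, rfl⟩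
      refine ⟨uadd (uadd u p) v, hTadd _ (hTadd _ hu _ hpT) _ hv, ?_⟩
      exact uadd_assoc' _ _ _)
  obtain ⟨u, hu, rfl⟩ := hq
  exact ⟨_, hqq, ⟨L, hL, hL.1.2.2 u (hTpos hu) p hpL⟩,
    fun m => Set.mem_iInter.1 (hTadd u hu p hpT) m⟩

/-- For every minimal sequence `⟨yₙ⟩` in the positive integers and every
central* set `A` in `(ℕ, +)`, there is a sum subsystem `⟨xₙ⟩` of `⟨yₙ⟩` with
`FS(⟨xₙ⟩) ∪ FP(⟨xₙ⟩) ⊆ A`. -/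
theorem centralstar_sum_subsystem (y : ℕ → ℕ) (hy : ∀ n, 0 < y n)
    (hmin : MinimalSequence y) (A : Set ℕ) (hA : CentralStar A) :
    ∃ x : ℕ → ℕ, SumSubsystem x y ∧ FS x ∪ FP x ⊆ A := by
  obtain ⟨q, hqq, hqK, hq⟩ := exists_min_idem' y hy hmin
  have hAq : A ∈ q := hA q hqq hqK
  have hmul : ∀ a, 0 < a → {x | a * x ∈ A} ∈ q := by
    intro a ha
    exact hA (q.map (a * ·)) (by rw [← map_uadd', hqq]) (map_mem_K' ha hqK)
  have step : ∀ st : {C : Set ℕ // C ∈ q} × ℕ × ℕ, ∃ H : Finset ℕ, H.Nonempty ∧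
      (∀ t ∈ H, st.2.1 ≤ t) ∧ (∑ t ∈ H, y t) ∈ st.1.1 ∧
      {z | (∑ t ∈ H, y t) + z ∈ st.1.1} ∈ q ∧
      ∀ a, 0 < a → a ≤ st.2.2 → a * (∑ t ∈ H, y t) ∈ A := by
    rintro ⟨⟨C, hC⟩, m, M⟩
    have h1 : {x | {z | x + z ∈ C} ∈ q} ∈ q := by
      rw [← mem_uadd', hqq]; exact hC
    have h2 : (⋂ a ∈ Set.Icc 1 M, {x | a * x ∈ A}) ∈ (q : Filter ℕ) := by
      rw [Filter.biInter_mem (Set.finite_Icc 1 M)]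
      intro a ha
      exact hmul a ha.1
    obtain ⟨x, ⟨⟨hx1, hx2⟩, hx3⟩, hx4⟩ := q.nonempty_of_mem
      (Filter.inter_mem (Filter.inter_mem (Filter.inter_mem (hq m) hC) h1) h2)
    obtain ⟨H, hH, hHm, rfl⟩ := hx1
    refine ⟨H, hH, hHm, hx2, hx3, fun a ha haM => ?_⟩
    exact Set.mem_iInter₂.1 hx4 a ⟨ha, haM⟩
  choose h hne hge hmem hnext hprod using step
  let S : ℕ → {C : Set ℕ // C ∈ q} × ℕ × ℕ := fun n => Nat.rec (⟨A, hAq⟩, 0, 1)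
    (fun _ st => (⟨st.1.1 ∩ {z | (∑ t ∈ h st, y t) + z ∈ st.1.1},
      Filter.inter_mem st.1.2 (hnext st)⟩, (h st).sup id + 1,
      st.2.2 * ∑ t ∈ h st, y t)) n
  let x : ℕ → ℕ := fun n => ∑ t ∈ h (S n), y t
  have hS1 : ∀ n, (S (n+1)).1.1 = (S n).1.1 ∩ {z | x n + z ∈ (S n).1.1} := fun n => rfl
  have hS2 : ∀ n, (S (n+1)).2.1 = (h (S n)).sup id + 1 := fun n => rfl
  have hS3 : ∀ n, (S (n+1)).2.2 = (S n).2.2 * x n := fun n => rfl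
  have hanti : Antitone (fun n => (S n).1.1) :=
    antitone_nat_of_succ_le fun n => by
      change (S (n+1)).1.1 ⊆ _
      rw [hS1]; exact Set.inter_subset_left
  have hxpos : ∀ n, 0 < x n := fun n => Finset.sum_pos (fun i _ => hy i) (hne _)
  refine ⟨x, ⟨fun n => h (S n), fun n => hne _, ?_, fun n => rfl⟩, ?_⟩
  · intro n i hi j hj
    have h1 : i ≤ (h (S n)).sup id := Finset.le_sup (f := id) hi
    have h2 := hge _ j hj
    rw [hS2] at h2
    omega
  · rintro s (⟨F, hF, rfl⟩ | ⟨F, hF, rfl⟩)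
    · have key : ∀ F : Finset ℕ, F.Nonempty → ∀ k, (∀ t ∈ F, k ≤ t) →
          ∑ t ∈ F, x t ∈ (S k).1.1 := by
        intro F
        induction F using Finset.induction_on_min with
        | empty => intro h; simp at h
        | insert a s has ih =>
          intro _ k hk
          refine hanti (hk a (Finset.mem_insert_self _ _)) ?_
          change _ ∈ (S a).1.1
          rw [Finset.sum_insert (fun h => lt_irrefl _ (has a h))]
          rcases s.eq_empty_or_nonempty with rfl | hs
          · simpa using hmem (S a)
          · have := ih hs (a + 1) (fun t ht => has t ht)
            rw [hS1] at this
            exact this.2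
      exact key F hF 0 (fun _ _ => Nat.zero_le _)
    · have key : ∀ k, ∀ F : Finset ℕ, F ⊆ Finset.range k → ∏ t ∈ F, x t ≤ (S k).2.2 := by
        have hr : ∀ k, ∏ t ∈ Finset.range k, x t = (S k).2.2 := by
          intro k
          induction k with
          | zero => rfl
          | succ k ih => rw [Finset.prod_range_succ, ih, hS3]
        intro k F hFk
        rw [← hr]
        exact Finset.prod_le_prod_of_subset_of_one_le' hFk (fun i _ _ => hxpos i)
      have hm := F.max'_mem hF
      rw [← Finset.prod_erase_mul _ _ hm]
      refine hprod (S (F.max' hF)) _ (Finset.prod_pos fun i _ => hxpos i) (key _ _ ?_)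
      intro t ht
      rw [Finset.mem_range]
      exact lt_of_le_of_ne (F.le_max' t (Finset.mem_of_mem_erase ht)) (Finset.ne_of_mem_erase ht)
end

section
/- Let S be a dense subsemigroup of ((0, ∞), +) and let A be a (finite or infinite) matrix with entries from ℚ and finitely many nonzero entries in each row. Then the set I(A) = {p ∈ 0⁺(S) : for every P ∈ p there exists x⃗ with entries from S such that all entries of Ax⃗ are in P} is a closed (hence compact) subset of the space of ultrafilters on S, and I(A) ≠ ∅ if and only if A is image partition regular near 0 over S. -/
/-- `0⁺(S)`: the ultrafilters `p` on `S` with `(0, r) ∩ S ∈ p` for every `r > 0`. -/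
def zeroPlus (S : Set ℝ) : Set (Ultrafilter S) :=
  {p | ∀ r : ℝ, 0 < r → {s : S | (s : ℝ) < r} ∈ p}

/-- `A` (a matrix over ℚ with rows indexed by `ι`, columns by `κ`, and finitely many
nonzero entries in each row) is image partition regular near 0 over `S`. -/
def IPRNearZero {ι κ : Type} (S : Set ℝ) (A : ι → κ → ℚ) : Prop :=
  ∀ (r : ℕ) (E : Fin r → Set ℝ), (∀ i, E i ⊆ S) → (∀ s ∈ S, ∃ i, s ∈ E i) →
    ∀ ε > (0 : ℝ),
      ∃ (i : Fin r) (x : κ → ℝ), (∀ j, x j ∈ S) ∧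
        ∀ a : ι, (∑ᶠ j, (A a j : ℝ) * x j) ∈ E i ∩ Set.Ioo 0 ε

/-- `I(A) = {p ∈ 0⁺(S) : for every P ∈ p there is x⃗ with entries from S such that all
entries of Ax⃗ are in P}`. -/
def IA {ι κ : Type} (S : Set ℝ) (A : ι → κ → ℚ) : Set (Ultrafilter S) :=
  {p | p ∈ zeroPlus S ∧ ∀ P ∈ p, ∃ x : κ → S,
    ∀ a : ι, ∃ s ∈ P, ((s : ℝ) = ∑ᶠ j, (A a j : ℝ) * (x j : ℝ))}

/-- For a dense subsemigroup `S` of `((0, ∞), +)` and a (finite or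
infinite) matrix `A` over ℚ with finitely many nonzero entries in each row, the set
`I(A)` is closed (hence compact) in `βS_d`, and `I(A) ≠ ∅` iff `A` is image partition
regular near 0 over `S`. -/
theorem IA_closed_and_nonempty_iff (S : Set ℝ)
    (hSpos : S ⊆ Set.Ioi 0)
    (hSadd : ∀ a ∈ S, ∀ b ∈ S, a + b ∈ S)
    (hSdense : ∀ x ∈ Set.Ioi (0 : ℝ), ∀ ε > 0, ∃ s ∈ S, |x - s| < ε)
    (ι κ : Type) (A : ι → κ → ℚ) (hrow : ∀ a : ι, {j | A a j ≠ 0}.Finite) :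
    IsClosed (IA S A) ∧ IsCompact (IA S A) ∧
      ((IA S A).Nonempty ↔ IPRNearZero S A) := by
  have hcl : IsClosed (IA S A) := by
    have : IA S A = (⋂ (r : ℝ) (_ : 0 < r), {p : Ultrafilter S | {s : S | (s : ℝ) < r} ∈ p}) ∩
        ⋂ (P : Set S) (_ : ¬ ∃ x : κ → S,
          ∀ a : ι, ∃ s ∈ P, ((s : ℝ) = ∑ᶠ j, (A a j : ℝ) * (x j : ℝ))),
          {p : Ultrafilter S | P ∈ p}ᶜ := by
      ext p
      simp only [IA, zeroPlus, Set.mem_setOf_eq, Set.mem_inter_iff, Set.mem_iInter,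
        Set.mem_compl_iff]
      refine and_congr Iff.rfl (forall_congr' fun P => ?_)
      exact not_imp_not.symm
    rw [this]
    refine IsClosed.inter ?_ ?_
    · exact isClosed_iInter fun r => isClosed_iInter fun _ => ultrafilter_isClosed_basic _
    · exact isClosed_iInter fun r => isClosed_iInter fun _ =>
        (ultrafilter_isOpen_basic _).isClosed_compl
  refine ⟨hcl, hcl.isCompact, ?_, ?_⟩
  · rintro ⟨p, hp0, hp⟩ r E hE hcov ε hε
    have h1 : ∀ᶠ s : S in (p : Filter S), ∃ i, (s : ℝ) ∈ E i :=
      Filter.Eventually.of_forall fun s => hcov s s.2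
    rw [Ultrafilter.eventually_exists_iff] at h1
    obtain ⟨i, hi⟩ := h1
    obtain ⟨x, hx⟩ := hp _ (Filter.inter_mem hi (hp0 ε hε))
    refine ⟨i, fun j => x j, fun j => (x j).2, fun a => ?_⟩
    obtain ⟨s, ⟨hs1, hs2⟩, hs⟩ := hx a
    rw [← hs]
    exact ⟨hs1, hSpos s.2, hs2⟩
  · intro h
    have hsmall : ∀ ε > (0 : ℝ), ∃ s ∈ S, s < ε := by
      intro ε hε
      obtain ⟨s, hs, hd⟩ := hSdense (ε / 2) (by simpa using hε) (ε / 2) (by linarith)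
      exact ⟨s, hs, by linarith [(abs_lt.1 hd).1]⟩
    by_contra hne
    have hbad : ∀ p : Ultrafilter S, ∃ P ∈ p, ∃ ε > (0 : ℝ),
        ¬ ((∃ s ∈ P, (s : ℝ) < ε) ∧ ∃ x : κ → S,
          ∀ a : ι, ∃ s ∈ P, (s : ℝ) < ε ∧ ((s : ℝ) = ∑ᶠ j, (A a j : ℝ) * (x j : ℝ))) := by
      intro p
      by_contra hc
      push Not at hc
      refine hne ⟨p, ?_, ?_⟩
      · intro r hr
        by_contra hm
        obtain ⟨⟨s, hs, hs'⟩, _⟩ := hc _ (Ultrafilter.compl_mem_iff_notMem.2 hm) r hr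
        exact hs hs'
      · intro P hP
        obtain ⟨_, x, hx⟩ := hc P hP 1 one_pos
        refine ⟨x, fun a => ?_⟩
        obtain ⟨s, hs, _, h2⟩ := hx a
        exact ⟨s, hs, h2⟩
    choose P hP e he hb using hbad
    obtain ⟨t, ht⟩ := (isCompact_univ (X := Ultrafilter S)).elim_finite_subcover
      (fun p => {q : Ultrafilter S | P p ∈ q}) (fun p => ultrafilter_isOpen_basic _)
      (fun p _ => Set.mem_iUnion.2 ⟨p, hP p⟩)
    have hcov : ∀ s : S, ∃ p ∈ t, s ∈ P p := by
      intro s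
      have := ht (Set.mem_univ (pure s))
      simpa using this
    obtain ⟨ε, hεt, hε⟩ : ∃ ε : ℝ, (∀ p ∈ t, ε < e p) ∧ 0 < ε := by
      have h1 : ∀ᶠ ε : ℝ in nhdsWithin 0 (Set.Ioi 0), ∀ p ∈ t, ε < e p :=
        (Filter.eventually_all_finset t).2 fun p _ =>
          nhdsWithin_le_nhds (Iio_mem_nhds (he p))
      exact (h1.and self_mem_nhdsWithin).exists
    rcases isEmpty_or_nonempty ι with hι | ⟨⟨a0⟩⟩
    · obtain ⟨s, hs, hsε⟩ := hsmall ε hε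
      obtain ⟨p, hpt, hsp⟩ := hcov ⟨s, hs⟩
      exact hb p ⟨⟨_, hsp, hsε.trans (hεt p hpt)⟩, fun _ => ⟨s, hs⟩, fun a => hι.elim a⟩
    · obtain ⟨i, x, hxS, hx⟩ := h t.card (fun i => Subtype.val '' P (t.equivFin.symm i))
        (fun i => by rintro _ ⟨s, _, rfl⟩; exact s.2)
        (fun s hs => by
          obtain ⟨p, hpt, hsp⟩ := hcov ⟨s, hs⟩
          exact ⟨t.equivFin ⟨p, hpt⟩, ⟨s, hs⟩, by simpa using hsp, rfl⟩) ε hε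
      have hlt := hεt _ (t.equivFin.symm i).2
      have key : ∀ a : ι, ∃ s ∈ P (t.equivFin.symm i), (s : ℝ) < e (t.equivFin.symm i) ∧
          ((s : ℝ) = ∑ᶠ j, (A a j : ℝ) * x j) := by
        intro a
        obtain ⟨⟨s, hs, hse⟩, _, h2⟩ := hx a
        exact ⟨s, hs, by rw [hse]; exact h2.trans hlt, hse⟩
      refine hb _ ⟨?_, fun j => ⟨x j, hxS j⟩, key⟩
      obtain ⟨s, hs, h1, _⟩ := key a0
      exact ⟨s, hs, h1⟩
end

section
/- Let S be a dense subsemigroup of ((0, ∞), +) that is also closed under multiplication, and let A be a (finite or infinite) matrix with entries from ℚ and finitely many nonzero entries in each row, which is image partition regular near 0 over S. Then I(A) = {p ∈ 0⁺(S) : for every P ∈ p there exists x⃗ with entries from S such that all entries of Ax⃗ are in P} is a left ideal of (0⁺(S), ·): for every p ∈ 0⁺(S) and q ∈ I(A), p · q ∈ I(A). -/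
/-- The semigroup operation `·` on the ultrafilters `βS_d` on `S ⊆ ℝ`:
`B ∈ p · q` iff `{x ∈ S : {y ∈ S : x · y ∈ B} ∈ q} ∈ p`. -/
def umulS (S : Set ℝ) (hS : ∀ a ∈ S, ∀ b ∈ S, a * b ∈ S)
    (p q : Ultrafilter S) : Ultrafilter S :=
  p.bind fun x => q.map fun y => (⟨x.1 * y.1, hS x.1 x.2 y.1 y.2⟩ : S)

/-- For a dense multiplicatively closed subsemigroup `S` of `((0, ∞), +)`
and a (finite or infinite) row-finite matrix `A` over ℚ that is image partition regular
near 0 over `S`, the set `I(A)` is a left ideal of `(0⁺(S), ·)`. -/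
theorem IA_left_ideal (S : Set ℝ)
    (hSpos : S ⊆ Set.Ioi 0)
    (hSadd : ∀ a ∈ S, ∀ b ∈ S, a + b ∈ S)
    (hSmul : ∀ a ∈ S, ∀ b ∈ S, a * b ∈ S)
    (hSdense : ∀ x ∈ Set.Ioi (0 : ℝ), ∀ ε > 0, ∃ s ∈ S, |x - s| < ε)
    (ι κ : Type) (A : ι → κ → ℚ) (hrow : ∀ a : ι, {j | A a j ≠ 0}.Finite)
    (hA : IPRNearZero S A) :
    ∀ p ∈ zeroPlus S, ∀ q ∈ IA S A, umulS S hSmul p q ∈ IA S A := by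
  intro p hp q hq
  have key : ∀ B : Set S, B ∈ umulS S hSmul p q ↔
      {x : S | {y : S | (⟨x.1 * y.1, hSmul x.1 x.2 y.1 y.2⟩ : S) ∈ B} ∈ q} ∈ p :=
    fun B => Iff.rfl
  refine ⟨?_, ?_⟩
  · intro r hr
    rw [key]
    refine Filter.mem_of_superset (hp 1 one_pos) ?_
    intro x hx
    refine Filter.mem_of_superset (hq.1 r hr) ?_
    intro y hy
    have hx1 : (x : ℝ) < 1 := hx
    have hy1 : (y : ℝ) < r := hy
    have hy0 : (0 : ℝ) < y := hSpos y.2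
    change (x : ℝ) * y < r
    nlinarith
  · intro P hP
    rw [key] at hP
    obtain ⟨c, hc⟩ := p.nonempty_of_mem hP
    obtain ⟨x, hx⟩ := hq.2 _ hc
    refine ⟨fun j => ⟨c.1 * (x j).1, hSmul c.1 c.2 (x j).1 (x j).2⟩, fun a => ?_⟩
    obtain ⟨s, hs, hs'⟩ := hx a
    refine ⟨_, hs, ?_⟩
    change (c : ℝ) * s = _
    rw [hs', ← smul_eq_mul, smul_finsum]
    exact finsum_congr fun j => by
      change (c : ℝ) * ((A a j : ℝ) * (x j : ℝ)) = (A a j : ℝ) * ((c : ℝ) * (x j : ℝ))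
      ring
end
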